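/- Let S be an almost symmetric numerical semigroup with embedding dimension 4 (i.e., minimally generated by four elements). Then the type of S is at most 3. -/

import Mathlib

/-- The numerical semigroup generated by `n`, viewed inside `ℤ`. -/
def NS {e : ℕ} (n : Fin e → ℕ) : Set ℤ :=
  {x | ∃ a : Fin e → ℕ, x = ∑ j, (a j : ℤ) * n j}

/-- Pseudo-Frobenius numbers of the numerical semigroup generated by `n`. -/
def PF {e : ℕ} (n : Fin e → ℕ) : Set ℤ :=
  {x | x ∉ NS n ∧ ∀ i, x + (n i : ℤ) ∈ NS n}

/-- `F` is the Frobenius number: the maximum of `ℤ \ S`. -/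
def IsFrob {e : ℕ} (n : Fin e → ℕ) (F : ℤ) : Prop :=
  F ∉ NS n ∧ ∀ x : ℤ, F < x → x ∈ NS n

/-- Almost symmetry with respect to the Frobenius number `F`. -/
def AlmostSym {e : ℕ} (n : Fin e → ℕ) (F : ℤ) : Prop :=
  ∀ x : ℤ, x ∉ NS n → F - x ∉ NS n → (x ∈ PF n ∧ F - x ∈ PF n)

/-- `A` is an RF-matrix for `f`. -/
def IsRF {e : ℕ} (n : Fin e → ℕ) (f : ℤ) (A : Matrix (Fin e) (Fin e) ℤ) : Prop :=
  (∀ i, A i i = -1) ∧ (∀ i j, i ≠ j → 0 ≤ A i j) ∧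
    (∀ i, ∑ j, A i j * (n j : ℤ) = f)

/-- `K = λ_{ij} = max {K ∈ ℕ : K·n_j - n_i ∉ S}`. -/
def IsLam {e : ℕ} (n : Fin e → ℕ) (i j : Fin e) (K : ℕ) : Prop :=
  ((K : ℤ) * n j - n i ∉ NS n) ∧
    ∀ L : ℕ, ((L : ℤ) * n j - n i ∉ NS n) → L ≤ K

/-- `n` is a minimal generating system. -/
def MinGen {e : ℕ} (n : Fin e → ℕ) : Prop :=
  ∀ i, ¬ ∃ a : Fin e → ℕ, a i = 0 ∧ (n i : ℤ) = ∑ j, (a j : ℤ) * n j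

theorem NS_zero {e : ℕ} (n : Fin e → ℕ) : (0 : ℤ) ∈ NS n := ⟨0, by simp⟩

theorem NS_add {e : ℕ} {n : Fin e → ℕ} {x y : ℤ} (hx : x ∈ NS n) (hy : y ∈ NS n) :
    x + y ∈ NS n := by
  obtain ⟨a, rfl⟩ := hx
  obtain ⟨b, rfl⟩ := hy
  refine ⟨a + b, ?_⟩
  rw [← Finset.sum_add_distrib]
  refine Finset.sum_congr rfl fun j _ => ?_
  simp only [Pi.add_apply]
  push_cast
  ring

theorem NS_nonneg {e : ℕ} {n : Fin e → ℕ} {x : ℤ} (hx : x ∈ NS n) : 0 ≤ x := by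
  obtain ⟨a, rfl⟩ := hx
  positivity

theorem NS_mul {e : ℕ} (n : Fin e → ℕ) (j : Fin e) (b : ℕ) : (b : ℤ) * n j ∈ NS n := by
  classical
  refine ⟨Pi.single j b, ?_⟩
  rw [Finset.sum_eq_single j] <;> simp +contextual [Pi.single_apply]

theorem NS_gen {e : ℕ} (n : Fin e → ℕ) (j : Fin e) : (n j : ℤ) ∈ NS n := by
  simpa using NS_mul n j 1

/-- If coefficient `j` is positive, the generator `n j` can be subtracted. -/
theorem NS_sub {e : ℕ} (n : Fin e → ℕ) (a : Fin e → ℕ) (j : Fin e) (h : 0 < a j) :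
    (∑ k, (a k : ℤ) * n k) - n j ∈ NS n := by
  classical
  refine ⟨Function.update a j (a j - 1), ?_⟩
  rw [← Finset.add_sum_erase _ _ (Finset.mem_univ j),
    ← Finset.add_sum_erase (a := j) _ (fun k => ((Function.update a j (a j - 1) k : ℕ) : ℤ) * n k)
      (Finset.mem_univ j)]
  have : ∑ k ∈ Finset.univ.erase j, ((Function.update a j (a j - 1) k : ℕ) : ℤ) * n k
      = ∑ k ∈ Finset.univ.erase j, (a k : ℤ) * n k := by
    refine Finset.sum_congr rfl fun k hk => ?_
    rw [Function.update_of_ne (Finset.ne_of_mem_erase hk)]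
  rw [this, Function.update_self]
  have h2 : ((a j - 1 : ℕ) : ℤ) = (a j : ℤ) - 1 := by omega
  rw [h2]
  ring

theorem gen_sub {e : ℕ} {n : Fin e → ℕ} (hpos : ∀ i, 0 < n i) (hmin : MinGen n)
    {i k : Fin e} (hik : i ≠ k) : (n k : ℤ) - n i ∉ NS n := by
  classical
  rintro ⟨a, ha⟩
  by_cases hk : a k = 0
  · apply hmin k
    refine ⟨a + Pi.single i 1, by simp [hk, hik.symm], ?_⟩
    have : ∑ j, (((a + Pi.single i 1 : Fin e → ℕ) j : ℕ) : ℤ) * n j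
        = (∑ j, (a j : ℤ) * n j) + ∑ j, (((Pi.single i 1 : Fin e → ℕ) j : ℕ) : ℤ) * n j := by
      rw [← Finset.sum_add_distrib]
      refine Finset.sum_congr rfl fun j _ => ?_
      simp only [Pi.add_apply]
      push_cast
      ring
    rw [this, ← ha, Finset.sum_eq_single i] <;> simp +contextual [Pi.single_apply]
  · have h1 := NS_nonneg (NS_sub n a k (Nat.pos_of_ne_zero hk))
    rw [← ha] at h1
    have := hpos i
    omega

/-- Generators which can be used to write `f + n i`. -/
noncomputable def useSet (n : Fin 4 → ℕ) (x : ℤ × Fin 4) : Finset (Fin 4) := by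
  classical
  exact Finset.univ.filter fun j => j ≠ x.2 ∧ x.1 + n x.2 - n j ∈ NS n

theorem mem_useSet {n : Fin 4 → ℕ} {x : ℤ × Fin 4} {j : Fin 4} :
    j ∈ useSet n x ↔ j ≠ x.2 ∧ x.1 + n x.2 - n j ∈ NS n := by
  simp [useSet]

theorem useSet_of_coeff {n : Fin 4 → ℕ} {f : ℤ} {i : Fin 4} (hf : f ∈ PF n)
    {a : Fin 4 → ℕ} (ha : f + n i = ∑ j, (a j : ℤ) * n j) {j : Fin 4} (hj : 0 < a j) :
    j ∈ useSet n (f, i) := by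
  have h := NS_sub n a j hj
  rw [← ha] at h
  refine mem_useSet.2 ⟨?_, h⟩
  rintro rfl
  exact hf.1 (by simpa using h)

theorem useSet_nonempty {n : Fin 4 → ℕ} (hpos : ∀ i, 0 < n i) (hmin : MinGen n)
    {f : ℤ} {i : Fin 4} (hf : f ∈ PF n) : (useSet n (f, i)).Nonempty := by
  obtain ⟨a, ha⟩ := hf.2 i
  by_cases h : ∃ j, 0 < a j
  · obtain ⟨j, hj⟩ := h
    exact ⟨j, useSet_of_coeff hf ha hj⟩
  · exfalso
    push Not at h
    have h0 : f + n i = 0 := by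
      rw [ha]
      refine Finset.sum_eq_zero fun j _ => ?_
      have := h j
      simp [Nat.le_zero.1 this]
    obtain ⟨k, hk⟩ := exists_ne i
    apply gen_sub hpos hmin hk.symm
    have := hf.2 k
    have e : f + n k = (n k : ℤ) - n i := by linarith
    rwa [e] at this

theorem useSet_singleton {n : Fin 4 → ℕ} {f : ℤ} {i j : Fin 4} (hf : f ∈ PF n)
    (h : useSet n (f, i) = {j}) : ∃ b : ℕ, f + n i = (b : ℤ) * n j := by
  obtain ⟨a, ha⟩ := hf.2 i
  refine ⟨a j, ?_⟩
  rw [ha]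
  refine Finset.sum_eq_single j (fun k _ hk => ?_) (by simp)
  rcases Nat.eq_zero_or_pos (a k) with h0 | h0
  · simp [h0]
  · have := useSet_of_coeff hf ha h0
    rw [h, Finset.mem_singleton] at this
    exact absurd this hk

theorem single_aux {n : Fin 4 → ℕ} {f g : ℤ} {i k j : Fin 4} (hf : f ∈ PF n) (hg : g ∈ PF n)
    (hU : useSet n (f, i) = {j}) (hV : useSet n (g, k) = {j}) {b c : ℕ}
    (hb : f + n i = (b : ℤ) * n j) (hc : g + n k = (c : ℤ) * n j) : ¬ b < c := by
  intro hlt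
  have hij : j ≠ i := (mem_useSet.1 (by rw [hU]; simp : j ∈ useSet n (f, i))).1
  have key : g + n k - n i ∈ NS n := by
    have h1 := NS_add (NS_mul n j (c - b - 1)) (hf.2 j)
    have e : ((c - b - 1 : ℕ) : ℤ) = (c : ℤ) - b - 1 := by omega
    rw [e] at h1
    have e2 : g + n k - n i = ((c : ℤ) - b - 1) * n j + (f + n j) := by
      rw [hc]
      linear_combination -hb
    rw [e2]
    exact h1
  by_cases hik : i = k
  · subst hik
    exact hg.1 (by simpa using key)
  · have : i ∈ useSet n (g, k) := mem_useSet.2 ⟨hik, key⟩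
    rw [hV, Finset.mem_singleton] at this
    exact hij this.symm

theorem single_eq {n : Fin 4 → ℕ} {f g : ℤ} {i k j : Fin 4} (hf : f ∈ PF n) (hg : g ∈ PF n)
    (hU : useSet n (f, i) = {j}) (hV : useSet n (g, k) = {j}) : f + n i = g + n k := by
  obtain ⟨b, hb⟩ := useSet_singleton hf hU
  obtain ⟨c, hc⟩ := useSet_singleton hg hV
  have h1 := single_aux hf hg hU hV hb hc
  have h2 := single_aux hg hf hV hU hc hb
  have : b = c := by omega
  rw [hb, hc, this]

theorem PF_finite {n : Fin 4 → ℕ} {F : ℤ} (hF : IsFrob n F) : (PF n).Finite := by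
  refine (Set.finite_Icc (-(n 0 : ℤ)) F).subset fun x hx => ⟨?_, ?_⟩
  · have := NS_nonneg (hx.2 0)
    linarith
  · by_contra h
    exact hx.1 (hF.2 x (not_le.1 h))

theorem PF_add {n : Fin 4 → ℕ} {f s : ℤ} (hf : f ∈ PF n) (hs : s ∈ NS n) (h0 : s ≠ 0) :
    f + s ∈ NS n := by
  obtain ⟨a, rfl⟩ := hs
  have : ∃ j, 0 < a j := by
    by_contra h
    push Not at h
    apply h0
    refine Finset.sum_eq_zero fun j _ => ?_
    simp [Nat.le_zero.1 (h j)]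
  obtain ⟨j, hj⟩ := this
  have := NS_add (hf.2 j) (NS_sub n a j hj)
  have e : f + ∑ k, (a k : ℤ) * n k = f + n j + (∑ k, (a k : ℤ) * n k - n j) := by ring
  rwa [e]

theorem F_sub_not_mem {n : Fin 4 → ℕ} {F f : ℤ} (hF : IsFrob n F) (hf : f ∈ PF n)
    (hne : f ≠ F) : F - f ∉ NS n := by
  intro h
  have := PF_add hf h (sub_ne_zero.2 hne.symm)
  exact hF.1 (by simpa using this)

theorem main_count {n : Fin 4 → ℕ} (hpos : ∀ i, 0 < n i) (hmin : MinGen n) {F : ℤ}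
    (hF : IsFrob n F) (P : Finset ℤ) (hP : ∀ f ∈ P, f ∈ PF n) (hPF : ∀ f ∈ P, f ≠ F)
    (hPs : ∀ f ∈ P, F - f ∈ P) : P.card ≤ 2 := by
  classical
  set X : Finset (ℤ × Fin 4) := P ×ˢ Finset.univ with hX
  let V : ℤ × Fin 4 → Finset (Fin 4) := fun x =>
    Finset.univ.filter fun j => j ≠ x.2 ∧ x.1 + n x.2 - n j ∈ P
  let W : ℤ × Fin 4 → Finset (Fin 4) := fun x =>
    Finset.univ.filter fun j => j ≠ x.2 ∧ (F - x.1) + n j - n x.2 ∈ NS n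
  have hXP : ∀ x ∈ X, x.1 ∈ P := fun x hx => (Finset.mem_product.1 hx).1
  have hXc : X.card = 4 * P.card := by
    rw [hX, Finset.card_product]
    simp [mul_comm]
  -- the three sets are disjoint
  have h3 : ∀ x ∈ X, (useSet n x).card + (V x).card + (W x).card ≤ 3 := by
    intro x hx
    have d1 : Disjoint (useSet n x) (V x) := by
      rw [Finset.disjoint_left]
      intro j hj hj'
      exact (hP _ (Finset.mem_filter.1 hj').2.2).1 (mem_useSet.1 hj).2
    have d2 : Disjoint (useSet n x ∪ V x) (W x) := by
      rw [Finset.disjoint_left]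
      intro j hj hj'
      have hw := (Finset.mem_filter.1 hj').2.2
      rcases Finset.mem_union.1 hj with h | h
      · have := NS_add (mem_useSet.1 h).2 hw
        apply hF.1
        have e : x.1 + n x.2 - n j + (F - x.1 + n j - n x.2) = F := by ring
        rwa [e] at this
      · have hv := (Finset.mem_filter.1 h).2.2
        apply F_sub_not_mem hF (hP _ hv) (hPF _ hv)
        have e : F - (x.1 + n x.2 - n j) = F - x.1 + n j - n x.2 := by ring
        rwa [e]
    rw [← Finset.card_union_of_disjoint d1, ← Finset.card_union_of_disjoint d2]
    have hsub : useSet n x ∪ V x ∪ W x ⊆ Finset.univ.erase x.2 := by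
      intro j hj
      simp only [Finset.mem_union, mem_useSet, V, W, Finset.mem_filter] at hj
      refine Finset.mem_erase.2 ⟨?_, Finset.mem_univ _⟩
      tauto
    have := Finset.card_le_card hsub
    rw [Finset.card_erase_of_mem (Finset.mem_univ _)] at this
    simpa using this
  have hWU : ∑ x ∈ X, (W x).card = ∑ x ∈ X, (useSet n x).card := by
    rw [← Finset.card_sigma, ← Finset.card_sigma]
    refine Finset.card_bij' (fun y _ => ⟨(F - y.1.1, y.2), y.1.2⟩)
      (fun y _ => ⟨(F - y.1.1, y.2), y.1.2⟩) ?_ ?_ ?_ ?_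
    · rintro ⟨⟨f, i⟩, j⟩ h
      simp only [Finset.mem_sigma, hX, Finset.mem_product, Finset.mem_univ, and_true, W,
        Finset.mem_filter, true_and, mem_useSet] at h ⊢
      exact ⟨hPs _ h.1, h.2.1.symm, h.2.2⟩
    · rintro ⟨⟨f, i⟩, j⟩ h
      simp only [Finset.mem_sigma, hX, Finset.mem_product, Finset.mem_univ, and_true, W,
        Finset.mem_filter, true_and, mem_useSet] at h ⊢
      refine ⟨hPs _ h.1, h.2.1.symm, ?_⟩
      simpa using h.2.2
    · rintro ⟨⟨f, i⟩, j⟩ h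
      simp
    · rintro ⟨⟨f, i⟩, j⟩ h
      simp
  -- singletons
  let T : Fin 4 → Finset (ℤ × Fin 4) := fun j => X.filter fun x => useSet n x = {j}
  have hTdis : ∀ j ∈ (Finset.univ : Finset (Fin 4)), ∀ k ∈ (Finset.univ : Finset (Fin 4)),
      j ≠ k → Disjoint (T j) (T k) := by
    intro j _ k _ hjk
    rw [Finset.disjoint_left]
    intro x hx hx'
    have h1 := (Finset.mem_filter.1 hx).2
    have h2 := (Finset.mem_filter.1 hx').2
    rw [h1] at h2
    exact hjk (Finset.singleton_injective h2)
  set TT := Finset.univ.biUnion T with hTT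
  have hTTX : TT ⊆ X := by
    intro x hx
    obtain ⟨j, _, hj⟩ := Finset.mem_biUnion.1 hx
    exact (Finset.mem_filter.1 hj).1
  have hTTc : TT.card = ∑ j, (T j).card := Finset.card_biUnion hTdis
  have hlow : 2 * X.card ≤ ∑ x ∈ X, (useSet n x).card + TT.card := by
    have e : TT.card = ∑ x ∈ X, if x ∈ TT then 1 else 0 := by
      rw [← Finset.sum_filter, Finset.filter_mem_eq_inter, Finset.inter_eq_right.2 hTTX]
      simp
    rw [e, ← Finset.sum_add_distrib, mul_comm, ← smul_eq_mul]
    refine Finset.card_nsmul_le_sum _ _ _ fun x hx => ?_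
    have hne : 0 < (useSet n x).card :=
      Finset.card_pos.2 (useSet_nonempty hpos hmin (hP _ (hXP x hx)))
    split_ifs with hxT
    · omega
    · have : (useSet n x).card ≠ 1 := by
        intro h1
        obtain ⟨j, hj⟩ := Finset.card_eq_one.1 h1
        exact hxT (Finset.mem_biUnion.2 ⟨j, Finset.mem_univ _, Finset.mem_filter.2 ⟨hx, hj⟩⟩)
      omega
  have hVlow : ∀ j, ∀ x ∈ T j, (T j).card - 1 ≤ (V x).card := by
    intro j x hx
    rw [← Finset.card_erase_of_mem hx]
    obtain ⟨hxX, hxU⟩ := Finset.mem_filter.1 hx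
    refine Finset.card_le_card_of_injOn Prod.snd ?_ ?_
    · rintro y hy
      obtain ⟨hyx, hyT⟩ := Finset.mem_erase.1 (Finset.mem_coe.1 hy)
      obtain ⟨hyX, hyU⟩ := Finset.mem_filter.1 hyT
      have he := single_eq (hP _ (hXP x hxX)) (hP _ (hXP y hyX)) hxU hyU
      refine Finset.mem_coe.2 (Finset.mem_filter.2 ⟨Finset.mem_univ _, ?_, ?_⟩)
      · intro h
        apply hyx
        rw [h] at he
        exact Prod.ext (by linarith) h
      · have e : x.1 + n x.2 - n y.2 = y.1 := by linarith
        rw [e]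
        exact hXP y hyX
    · rintro y hy z hz h
      obtain ⟨hyX, hyU⟩ := Finset.mem_filter.1 (Finset.mem_erase.1 (Finset.mem_coe.1 hy)).2
      obtain ⟨hzX, hzU⟩ := Finset.mem_filter.1 (Finset.mem_erase.1 (Finset.mem_coe.1 hz)).2
      have he := single_eq (hP _ (hXP y hyX)) (hP _ (hXP z hzX)) hyU hzU
      rw [h] at he
      exact Prod.ext (by linarith) h
  have hVsum : ∑ j, (T j).card * ((T j).card - 1) ≤ ∑ x ∈ X, (V x).card := by
    calc ∑ j, (T j).card * ((T j).card - 1) ≤ ∑ j, ∑ x ∈ T j, (V x).card := by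
          refine Finset.sum_le_sum fun j _ => ?_
          rw [← smul_eq_mul]
          exact Finset.card_nsmul_le_sum _ _ _ (hVlow j)
      _ = ∑ x ∈ TT, (V x).card := (Finset.sum_biUnion hTdis).symm
      _ ≤ _ := Finset.sum_le_sum_of_subset hTTX
  have hup : ∑ x ∈ X, (useSet n x).card + ∑ x ∈ X, (V x).card + ∑ x ∈ X, (W x).card
      ≤ X.card * 3 := by
    rw [← Finset.sum_add_distrib, ← Finset.sum_add_distrib, ← smul_eq_mul]
    exact Finset.sum_le_card_nsmul _ _ _ h3
  have hfin : 2 * ∑ j, (T j).card ≤ ∑ j, (T j).card * ((T j).card - 1) + 8 := by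
    have : ∀ c : ℕ, 2 * c ≤ c * (c - 1) + 2 := by
      intro c
      rcases c with _ | _ | c
      · simp
      · simp
      · simp only [Nat.add_sub_cancel]
        nlinarith
    rw [Finset.mul_sum]
    calc ∑ j, 2 * (T j).card ≤ ∑ j, ((T j).card * ((T j).card - 1) + 2) :=
          Finset.sum_le_sum fun j _ => this _
      _ = _ := by simp [Finset.sum_add_distrib]
  omega

theorem stmt12 (n : Fin 4 → ℕ)
    (hpos : ∀ i, 0 < n i)
    (hgcd : Finset.univ.gcd n = 1)
    (hmin : MinGen n)
    (F : ℤ) (hF : IsFrob n F) (hAS : AlmostSym n F) :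
    (PF n).ncard ≤ 3 := by
  classical
  have hfin := PF_finite hF
  set P : Finset ℤ := hfin.toFinset.erase F with hPdef
  have hmem : ∀ f, f ∈ P ↔ f ≠ F ∧ f ∈ PF n := by
    intro f
    simp [hPdef]
  have hne0 : (0 : ℤ) ∉ PF n := fun h => h.1 (NS_zero n)
  have hcard := main_count hpos hmin hF P (fun f hf => ((hmem f).1 hf).2)
    (fun f hf => ((hmem f).1 hf).1) (by
      intro f hf
      obtain ⟨h1, h2⟩ := (hmem f).1 hf
      refine (hmem _).2 ⟨?_, (hAS f h2.1 (F_sub_not_mem hF h2 h1)).2⟩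
      intro h
      apply hne0
      have : f = 0 := by linarith
      rwa [this] at h2)
  rw [Set.ncard_eq_toFinset_card _ hfin]
  have := Finset.pred_card_le_card_erase (s := hfin.toFinset) (a := F)
  have hPc : P.card = (hfin.toFinset.erase F).card := by rw [hPdef]
  rw [hPc] at hcard
  exact (by omega : hfin.toFinset.card ≤ 3)
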